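/- Let G be a weighted graph with terminal set K of size k, fix a terminal v_k ∈ K, and let 𝒰 be the collection of nonempty subsets U ⊆ K with v_k ∉ U. If X ⊆ 𝒰 contains two members P, Q with P ∩ Q = ∅, then A(X) = ∅. -/

import Mathlib

open scoped Classical

/-- A weighted graph with a distinguished embedded set of terminals indexed by `κ`:
a finite vertex type `V`, an embedding `ι : κ ↪ V` of the terminals, and a symmetric
nonnegative capacity function `c` on pairs of vertices. -/
structure WeightedGraph (κ : Type) where
  V : Type
  [fintypeV : Fintype V]
  ι : κ ↪ V
  c : V → V → ℝ
  symm : ∀ u v, c u v = c v u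
  nonneg : ∀ u v, 0 ≤ c u v

namespace WeightedGraph

variable {κ : Type}

instance (G : WeightedGraph κ) : Fintype G.V := G.fintypeV

/-- The cut function `h_G(A) = Σ_{u ∈ A, v ∉ A} c(u,v)`. -/
noncomputable def cutval (G : WeightedGraph κ) (A : Finset G.V) : ℝ :=
  ∑ u ∈ A, ∑ v ∈ Aᶜ, G.c u v

/-- The vertex sets realizing the terminal partition `(U, K \ U)`. -/
noncomputable def cutSets (G : WeightedGraph κ) (U : Finset κ) : Finset (Finset G.V) :=
  Finset.univ.filter fun A => ∀ x : κ, G.ι x ∈ A ↔ x ∈ U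

theorem cutSets_nonempty (G : WeightedGraph κ) (U : Finset κ) : (G.cutSets U).Nonempty := by
  refine ⟨U.image G.ι, ?_⟩
  simp [cutSets, Finset.mem_image, G.ι.injective.eq_iff]

/-- The terminal cut function `h_K^G(U) = min { h_G(A) : A ∩ K = U }`. -/
noncomputable def termCut (G : WeightedGraph κ) (U : Finset κ) : ℝ :=
  (G.cutSets U).inf' (G.cutSets_nonempty U) G.cutval

/-- `H` is a mimicking network for `(G, K)`: all minimum terminal cut values agree. -/
def IsMimicking (G H : WeightedGraph κ) : Prop :=
  ∀ U : Finset κ, H.termCut U = G.termCut U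

/-- `H` is a quotient (contraction) of `G` along the surjection `f`: terminals map to
terminals, and capacities between distinct classes are sums of the original capacities. -/
def IsQuotient (G H : WeightedGraph κ) (f : G.V → H.V) : Prop :=
  Function.Surjective f ∧ (∀ x : κ, f (G.ι x) = H.ι x) ∧
    ∀ y z : H.V, y ≠ z →
      H.c y z = ∑ u ∈ Finset.univ.filter (fun u => f u = y),
        ∑ v ∈ Finset.univ.filter (fun v => f v = z), G.c u v

end WeightedGraph

/-- `A` is a minimum-cardinality minimizer realizing the minimum terminal cut
`h_K^G(U)`: it induces the terminal partition `(U, K \ U)`, achieves the minimum cut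
value, and has minimum cardinality among all such minimizers. -/
def WeightedGraph.IsMinCutSet {κ : Type} (G : WeightedGraph κ) (U : Finset κ)
    (A : Finset G.V) : Prop :=
  (∀ x : κ, G.ι x ∈ A ↔ x ∈ U) ∧ G.cutval A = G.termCut U ∧
    ∀ B : Finset G.V, (∀ x : κ, G.ι x ∈ B ↔ x ∈ U) → G.cutval B = G.termCut U →
      A.card ≤ B.card

/-- `𝒰`: the collection of nonempty subsets `U ⊆ K` not containing the fixed
terminal `t` (= `v_k`). -/
noncomputable def terminalSubsets (κ : Type) [Fintype κ] (t : κ) : Finset (Finset κ) :=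
  Finset.univ.filter fun U : Finset κ => U.Nonempty ∧ t ∉ U

/-- `A(X) = (∩_{Z ∈ X} S(Z)) ∩ (∩_{W ∈ 𝒰 \ X} (V \ S(W)))`, the cluster of vertices
lying inside `S(Z)` exactly for the members `Z` of the family `X ⊆ 𝒰`. -/
noncomputable def region {κ : Type} [Fintype κ] (G : WeightedGraph κ) (t : κ)
    (S : Finset κ → Finset G.V) (X : Finset (Finset κ)) : Finset G.V :=
  Finset.univ.filter fun v : G.V =>
    (∀ Z ∈ X, v ∈ S Z) ∧ ∀ W ∈ terminalSubsets κ t \ X, v ∉ S W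

/-!
For a symmetric capacity function the cut function is invariant under complementation, so applying
submodularity to `A` and `Bᶜ` gives posimodularity: `h (A \ B) + h (B \ A) ≤ h A + h B`. If `A`
and `B` are minimum cuts for disjoint terminal sets, then `A \ B` and `B \ A` induce the same
terminal partitions as `A` and `B`, so posimodularity makes both of them minimum cuts again. If
moreover `A` has minimum cardinality, then `A \ B = A`.
-/

namespace WeightedGraph

variable {κ : Type} {G : WeightedGraph κ} {U W : Finset κ} {A B : Finset G.V}

theorem cutval_eq_sum_ite (G : WeightedGraph κ) (A : Finset G.V) :
    G.cutval A = ∑ u, ∑ v, if u ∈ A ∧ v ∉ A then G.c u v else 0 := by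
  simp only [cutval, ite_and, ← Finset.mem_compl, Finset.sum_ite_irrel, Finset.sum_const_zero,
    Finset.sum_ite_mem, Finset.univ_inter]

theorem cutval_compl (G : WeightedGraph κ) (A : Finset G.V) : G.cutval Aᶜ = G.cutval A := by
  simp only [cutval, compl_compl]
  rw [Finset.sum_comm]
  simp only [G.symm]

theorem cutval_inter_add_cutval_union_le (G : WeightedGraph κ) (A B : Finset G.V) :
    G.cutval (A ∩ B) + G.cutval (A ∪ B) ≤ G.cutval A + G.cutval B := by
  simp only [cutval_eq_sum_ite, ← Finset.sum_add_distrib, Finset.mem_inter, Finset.mem_union]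
  refine Finset.sum_le_sum fun u _ => Finset.sum_le_sum fun v _ => ?_
  -- The two sides differ only for pairs between `A \ B` and `B \ A`, counted on the right alone.
  have hc : 0 ≤ G.c u v := G.nonneg u v
  by_cases huA : u ∈ A <;> by_cases hvA : v ∈ A <;> by_cases huB : u ∈ B <;>
    by_cases hvB : v ∈ B <;> simp [huA, hvA, huB, hvB, hc]

theorem cutval_sdiff_add_cutval_sdiff_le (G : WeightedGraph κ) (A B : Finset G.V) :
    G.cutval (A \ B) + G.cutval (B \ A) ≤ G.cutval A + G.cutval B := by
  have hinter : A ∩ Bᶜ = A \ B := (Finset.sdiff_eq_inter_compl A B).symm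
  have hunion : A ∪ Bᶜ = (B \ A)ᶜ := by
    rw [Finset.sdiff_eq_inter_compl, Finset.compl_inter, compl_compl, Finset.union_comm]
  calc G.cutval (A \ B) + G.cutval (B \ A)
      = G.cutval (A ∩ Bᶜ) + G.cutval (A ∪ Bᶜ) := by rw [hinter, hunion, cutval_compl]
    _ ≤ G.cutval A + G.cutval Bᶜ := G.cutval_inter_add_cutval_union_le A Bᶜ
    _ = G.cutval A + G.cutval B := by rw [cutval_compl]

theorem mem_cutSets : A ∈ G.cutSets U ↔ ∀ x, G.ι x ∈ A ↔ x ∈ U := by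
  simp [cutSets]

theorem termCut_le_cutval (hA : A ∈ G.cutSets U) : G.termCut U ≤ G.cutval A :=
  Finset.inf'_le _ hA

theorem sdiff_mem_cutSets (hA : A ∈ G.cutSets U) (hB : B ∈ G.cutSets W) :
    A \ B ∈ G.cutSets (U \ W) := by
  rw [mem_cutSets] at hA hB ⊢
  intro x
  rw [Finset.mem_sdiff, Finset.mem_sdiff, hA, hB]

theorem sdiff_mem_cutSets_of_disjoint (hA : A ∈ G.cutSets U) (hB : B ∈ G.cutSets W)
    (hUW : Disjoint U W) : A \ B ∈ G.cutSets U := by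
  simpa only [hUW.sdiff_eq_left] using sdiff_mem_cutSets hA hB

theorem cutval_sdiff_eq_termCut_of_disjoint (hA : A ∈ G.cutSets U) (hB : B ∈ G.cutSets W)
    (hAmin : G.cutval A = G.termCut U) (hBmin : G.cutval B = G.termCut W) (hUW : Disjoint U W) :
    G.cutval (A \ B) = G.termCut U := by
  have hAB : G.termCut U ≤ G.cutval (A \ B) :=
    termCut_le_cutval (sdiff_mem_cutSets_of_disjoint hA hB hUW)
  have hBA : G.termCut W ≤ G.cutval (B \ A) :=
    termCut_le_cutval (sdiff_mem_cutSets_of_disjoint hB hA hUW.symm)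
  have hposimodular := G.cutval_sdiff_add_cutval_sdiff_le A B
  linarith

namespace IsMinCutSet

theorem mem_cutSets (hA : G.IsMinCutSet U A) : A ∈ G.cutSets U :=
  WeightedGraph.mem_cutSets.2 hA.1

theorem cutval_eq_termCut (hA : G.IsMinCutSet U A) : G.cutval A = G.termCut U :=
  hA.2.1

theorem card_le_card (hA : G.IsMinCutSet U A) (hB : B ∈ G.cutSets U)
    (hBmin : G.cutval B = G.termCut U) : A.card ≤ B.card :=
  hA.2.2 B (WeightedGraph.mem_cutSets.1 hB) hBmin

theorem disjoint_of_cutval_eq_termCut (hA : G.IsMinCutSet U A) (hB : B ∈ G.cutSets W)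
    (hBmin : G.cutval B = G.termCut W) (hUW : Disjoint U W) : Disjoint A B := by
  have hmem : A \ B ∈ G.cutSets U := sdiff_mem_cutSets_of_disjoint hA.mem_cutSets hB hUW
  have hmin : G.cutval (A \ B) = G.termCut U :=
    cutval_sdiff_eq_termCut_of_disjoint hA.mem_cutSets hB hA.cutval_eq_termCut hBmin hUW
  have hsdiff : A \ B = A :=
    Finset.eq_of_subset_of_card_le Finset.sdiff_subset (hA.card_le_card hmem hmin)
  exact Finset.sdiff_eq_self_iff_disjoint.1 hsdiff

end IsMinCutSet

end WeightedGraph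

theorem region_subset_of_mem {κ : Type} [Fintype κ] {G : WeightedGraph κ} {t : κ}
    {S : Finset κ → Finset G.V} {X : Finset (Finset κ)} {Z : Finset κ} (hZ : Z ∈ X) :
    region G t S X ⊆ S Z :=
  fun _ hv => (Finset.mem_filter.1 hv).2.1 Z hZ

/-- if the family `X ⊆ 𝒰` contains two disjoint members then `A(X) = ∅`. -/
theorem region_empty_of_disjoint_members {κ : Type} [Fintype κ] (G : WeightedGraph κ)
    (t : κ) (S : Finset κ → Finset G.V)
    (hS : ∀ U ∈ terminalSubsets κ t, G.IsMinCutSet U (S U))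
    (X : Finset (Finset κ)) (hX : X ⊆ terminalSubsets κ t)
    (P Q : Finset κ) (hP : P ∈ X) (hQ : Q ∈ X) (hPQ : P ∩ Q = ∅) :
    region G t S X = ∅ := by
  have hSP : G.IsMinCutSet P (S P) := hS P (hX hP)
  have hSQ : G.IsMinCutSet Q (S Q) := hS Q (hX hQ)
  have hdisjoint : Disjoint (S P) (S Q) :=
    hSP.disjoint_of_cutval_eq_termCut hSQ.mem_cutSets hSQ.cutval_eq_termCut
      (Finset.disjoint_iff_inter_eq_empty.2 hPQ)
  exact (hdisjoint.mono (region_subset_of_mem hP) (region_subset_of_mem hQ)).eq_bot_of_self
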